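/- arXiv:1802.05671 — 2 statements merged into one kernel-verified Lean document; each statement's English description precedes it below -/
import Mathlib

section
/- The origin is a Center of the Whorl normal form: for every point p = (p₁,p₂) ∈ ℝ² with p ≠ (0,0), |p₁| < 1, and H(p) < 1/6 (where H(x,y) = y²/2 + x⁶/6 − x⁴/2 + x²/2), there exist a period T > 0 and a differentiable curve γ : ℝ → ℝ² with γ(0) = p, γ'(t) = F(γ(t)) for all t ∈ ℝ, and γ(t + T) = γ(t) for all t ∈ ℝ, where F(x,y) = (y, −x(x²−1)²); that is, the solution through p is a nonconstant closed orbit surrounding the origin. -/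
/-- The Whorl normal form vector field `F(x,y) = (y, -x(x²-1)²)`. -/
def whorlField : ℝ × ℝ → ℝ × ℝ :=
  fun p => (p.2, -p.1 * (p.1 ^ 2 - 1) ^ 2)

/-- The conserved energy of the Whorl normal form:
`H(x,y) = y²/2 + x⁶/6 - x⁴/2 + x²/2`. -/
noncomputable def whorlEnergy : ℝ × ℝ → ℝ :=
  fun p => p.2 ^ 2 / 2 + p.1 ^ 6 / 6 - p.1 ^ 4 / 2 + p.1 ^ 2 / 2

/-- Reparametrisation of the line by a positive continuous periodic speed. -/
lemma exists_angle (f : ℝ → ℝ) (hf : Continuous f) (m : ℝ) (hm : 0 < m) (hfm : ∀ s, m ≤ f s)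
    (hper : Function.Periodic f (2 * Real.pi)) (a : ℝ) :
    ∃ T > (0 : ℝ), ∃ θ : ℝ → ℝ, θ 0 = a ∧ (∀ t, HasDerivAt θ (f (θ t))⁻¹ t) ∧
      ∀ t, θ (t + T) = θ t + 2 * Real.pi := by
  have hint : ∀ x y, IntervalIntegrable f MeasureTheory.volume x y :=
    fun x y => hf.intervalIntegrable x y
  set τ : ℝ → ℝ := fun x => ∫ s in a..x, f s with hτ
  have hd : ∀ x, HasDerivAt τ (f x) x := fun x =>
    intervalIntegral.integral_hasDerivAt_right (hint _ _)
      (hf.stronglyMeasurableAtFilter _ _) hf.continuousAt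
  have hdiff : Differentiable ℝ τ := fun x => (hd x).differentiableAt
  have hcont : Continuous τ := hdiff.continuous
  have hmono : StrictMono τ := by
    apply strictMono_of_deriv_pos
    intro x
    rw [(hd x).deriv]
    exact hm.trans_le (hfm x)
  have ha : τ a = 0 := by simp [hτ]
  have hmono2 : Monotone (fun x => τ x - m * x) := by
    have hd2 : ∀ x, HasDerivAt (fun x => τ x - m * x) (f x - m * 1) x := fun x =>
      (hd x).sub ((hasDerivAt_id x).const_mul m)
    apply monotone_of_deriv_nonneg (fun x => (hd2 x).differentiableAt)
    intro x
    rw [(hd2 x).deriv]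
    linarith [hfm x]
  have htop : Filter.Tendsto τ Filter.atTop Filter.atTop := by
    have h1 : Filter.Tendsto (fun x : ℝ => m * x + (-(m * a))) Filter.atTop Filter.atTop :=
      Filter.tendsto_atTop_add_const_right _ _ (Filter.tendsto_id.const_mul_atTop hm)
    refine Filter.tendsto_atTop_mono' _ ?_ h1
    filter_upwards [Filter.eventually_ge_atTop a] with x hx
    have := hmono2 hx
    simp only [ha] at this
    linarith
  have hbot : Filter.Tendsto τ Filter.atBot Filter.atBot := by
    have h1 : Filter.Tendsto (fun x : ℝ => m * x + (-(m * a))) Filter.atBot Filter.atBot :=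
      Filter.tendsto_atBot_add_const_right _ _ (Filter.tendsto_id.const_mul_atBot hm)
    refine Filter.tendsto_atBot_mono' _ ?_ h1
    filter_upwards [Filter.eventually_le_atBot a] with x hx
    have := hmono2 hx
    simp only [ha] at this
    linarith
  have hsurj : Function.Surjective τ := hcont.surjective htop hbot
  let e : ℝ ≃o ℝ := hmono.orderIsoOfSurjective τ hsurj
  have he : ∀ x, e x = τ x := fun x => rfl
  have hes : ∀ t, τ (e.symm t) = t := fun t => e.apply_symm_apply t
  refine ⟨∫ s in a..(a + 2 * Real.pi), f s, ?_, e.symm, ?_, ?_, ?_⟩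
  · have : τ a < τ (a + 2 * Real.pi) := hmono (by linarith [Real.pi_pos])
    rw [ha] at this
    exact this
  · apply hmono.injective
    rw [hes, ha]
  · intro t
    exact HasDerivAt.of_local_left_inverse e.symm.continuous.continuousAt (hd _)
      (hm.trans_le (hfm _)).ne' (Filter.Eventually.of_forall hes)
  · intro t
    apply hmono.injective
    rw [hes]
    have h1 : τ (e.symm t + 2 * Real.pi)
        = τ (e.symm t) + ∫ s in (e.symm t)..(e.symm t + 2 * Real.pi), f s :=
      (intervalIntegral.integral_add_adjacent_intervals (hint _ _) (hint _ _)).symm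
    rw [h1, hes, hper.intervalIntegral_add_eq (e.symm t) a]

/-- `c(u) = (1 - 3u²)^{1/3}`. -/
noncomputable def whorlC (u : ℝ) : ℝ := (1 - 3 * u ^ 2) ^ (1 / 3 : ℝ)

/-- `q(u) = √((1 + c + c²)/3)`. -/
noncomputable def whorlQ (u : ℝ) : ℝ := Real.sqrt ((1 + whorlC u + whorlC u ^ 2) / 3)

lemma whorlC_pos {u : ℝ} (hu : 3 * u ^ 2 < 1) : 0 < whorlC u :=
  Real.rpow_pos_of_pos (by linarith) _

lemma whorlC_cube {u : ℝ} (hu : 3 * u ^ 2 < 1) : whorlC u ^ 3 = 1 - 3 * u ^ 2 := by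
  unfold whorlC
  rw [← Real.rpow_natCast, ← Real.rpow_mul (by linarith)]
  norm_num

lemma whorlQ_pos {u : ℝ} (hu : 3 * u ^ 2 < 1) : 0 < whorlQ u := by
  have := whorlC_pos hu
  unfold whorlQ
  positivity

lemma whorlQ_sq {u : ℝ} (hu : 3 * u ^ 2 < 1) :
    whorlQ u ^ 2 = (1 + whorlC u + whorlC u ^ 2) / 3 := by
  have := whorlC_pos hu
  unfold whorlQ
  exact Real.sq_sqrt (by positivity)

lemma whorlC_hasDerivAt {u : ℝ} (hu : 3 * u ^ 2 < 1) :
    HasDerivAt whorlC (-2 * u / whorlC u ^ 2) u := by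
  have h0 : HasDerivAt (fun u : ℝ => 1 - 3 * u ^ 2) (-(6 * u)) u := by
    have := (((hasDerivAt_id u).pow 2).const_mul 3).const_sub 1
    refine HasDerivAt.congr_deriv this ?_
    simp only [id]
    push_cast
    ring
  have h1 := h0.rpow_const (p := (1 / 3 : ℝ)) (Or.inl (by linarith))
  have hc := whorlC_pos hu
  have h2 : (1 - 3 * u ^ 2) ^ ((1 / 3 : ℝ) - 1) = (whorlC u ^ 2)⁻¹ := by
    unfold whorlC
    rw [← Real.rpow_natCast (_ ^ (1 / 3 : ℝ)) 2, ← Real.rpow_mul (by linarith),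
      ← Real.rpow_neg (by linarith)]
    norm_num
  rw [h2] at h1
  refine HasDerivAt.congr_deriv h1 ?_
  field_simp
  ring

lemma whorlX_hasDerivAt {u : ℝ} (hu : 3 * u ^ 2 < 1) :
    HasDerivAt (fun u => u / whorlQ u) (whorlQ u / whorlC u ^ 2) u := by
  have hc := whorlC_pos hu
  have hq := whorlQ_pos hu
  have hq2 := whorlQ_sq hu
  have hc3 := whorlC_cube hu
  have h1 := whorlC_hasDerivAt hu
  have h2 : HasDerivAt whorlQ _ u :=
    (((h1.const_add 1).add (h1.pow 2)).div_const 3).sqrt (by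
      simp only [Pi.add_apply, Pi.pow_apply]; positivity)
  have h3 := (hasDerivAt_id u).div h2 hq.ne'
  refine HasDerivAt.congr_deriv h3 ?_
  symm
  change _ = (1 * whorlQ u - u * (_ / (2 * whorlQ u))) / _
  generalize whorlQ u = q at *
  generalize whorlC u = c at *
  field_simp
  have h4 : q ^ 4 = ((1 + c + c ^ 2) / 3) ^ 2 := by rw [← hq2]; ring
  have hu2 : u ^ 2 = (1 - c ^ 3) / 3 := by linarith
  push_cast
  ring_nf
  ring_nf at h4 hq2 hu2
  simp only [h4, hq2, hu2]
  ring

/-- the origin is a Center of the Whorl normal form: through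
every point `p ≠ (0,0)` with `|p₁| < 1` and `H(p) < 1/6` there passes a
nonconstant periodic solution. -/
theorem whorl_origin_center (p : ℝ × ℝ)
    (hp : p ≠ (0, 0)) (hx : |p.1| < 1) (hH : whorlEnergy p < 1 / 6) :
    ∃ T > (0 : ℝ), ∃ γ : ℝ → ℝ × ℝ,
      γ 0 = p ∧
      (∀ t : ℝ, HasDerivAt γ (whorlField (γ t)) t) ∧
      ∀ t : ℝ, γ (t + T) = γ t := by
  obtain ⟨x, y⟩ := p
  simp only [whorlEnergy] at hH hx
  have hx2 : 0 < 1 - x ^ 2 := by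
    have := (sq_lt_one_iff_abs_lt_one x).2 hx
    linarith
  set c₀ : ℝ := 1 - x ^ 2 with hc₀
  set q₀ : ℝ := Real.sqrt ((1 + c₀ + c₀ ^ 2) / 3) with hq₀
  have hq₀2 : q₀ ^ 2 = (1 + c₀ + c₀ ^ 2) / 3 := Real.sq_sqrt (by positivity)
  have hq₀p : 0 < q₀ := by positivity
  set z : ℂ := ⟨y, x * q₀⟩ with hz
  set r : ℝ := ‖z‖ with hr
  have hcos : r * Real.cos z.arg = y := Complex.norm_mul_cos_arg z
  have hsin : r * Real.sin z.arg = x * q₀ := Complex.norm_mul_sin_arg z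
  have hr2 : r ^ 2 = y ^ 2 + x ^ 2 * q₀ ^ 2 := by
    have := Real.sin_sq_add_cos_sq z.arg
    calc r ^ 2 = (r * Real.cos z.arg) ^ 2 + (r * Real.sin z.arg) ^ 2 := by
          linear_combination (-r ^ 2) * this
      _ = _ := by rw [hcos, hsin]; ring
  have hr1 : 3 * r ^ 2 < 1 := by
    rw [hr2, hq₀2, hc₀]
    nlinarith
  have hu : ∀ s, 3 * (r * Real.sin s) ^ 2 < 1 := by
    intro s
    have h1 : (r * Real.sin s) ^ 2 ≤ r ^ 2 := by
      rw [mul_pow]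
      exact mul_le_of_le_one_right (sq_nonneg r) (Real.sin_sq_le_one s)
    linarith
  have hCc : Continuous fun s => whorlC (r * Real.sin s) := by
    refine continuous_iff_continuousAt.2 fun s => ?_
    exact ContinuousAt.comp (f := fun s => r * Real.sin s) (g := whorlC)
      (whorlC_hasDerivAt (hu s)).continuousAt (by fun_prop)
  have hQc : Continuous fun s => whorlQ (r * Real.sin s) := by
    unfold whorlQ
    fun_prop
  obtain ⟨T, hT, θ, h0, hθ, hθT⟩ := exists_angle
    (fun s => whorlQ (r * Real.sin s) / whorlC (r * Real.sin s) ^ 2)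
    (hQc.div (hCc.pow 2) fun s => (pow_pos (whorlC_pos (hu s)) 2).ne')
    (1 / 3) (by norm_num)
    (by
      intro s
      have hc := whorlC_pos (hu s)
      have hc3 := whorlC_cube (hu s)
      have hq := whorlQ_pos (hu s)
      have hq2 := whorlQ_sq (hu s)
      have hc1 : whorlC (r * Real.sin s) ≤ 1 := by
        by_contra h
        push Not at h
        have := one_lt_pow₀ h (n := 3) (by norm_num)
        nlinarith [sq_nonneg (r * Real.sin s)]
      have hq1 : 1 / 3 ≤ whorlQ (r * Real.sin s) := by
        by_contra h
        push Not at h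
        nlinarith
      rw [le_div_iff₀ (by positivity)]
      nlinarith)
    (by intro s; simp only [Real.sin_add_two_pi]) z.arg
  refine ⟨T, hT, fun t => (r * Real.sin (θ t) / whorlQ (r * Real.sin (θ t)),
    r * Real.cos (θ t)), ?_, ?_, ?_⟩
  · have hC : whorlC (x * q₀) = c₀ := by
      have h1 : 1 - 3 * (x * q₀) ^ 2 = c₀ ^ 3 := by
        rw [mul_pow, hq₀2, hc₀]; ring
      unfold whorlC
      rw [h1, ← Real.rpow_natCast, ← Real.rpow_mul hx2.le]
      norm_num
    have hQ : whorlQ (x * q₀) = q₀ := by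
      unfold whorlQ
      rw [hC]
    simp only [h0, hsin, hcos, hQ]
    rw [mul_div_cancel_right₀ _ hq₀p.ne']
  · intro t
    have hc := whorlC_pos (hu (θ t))
    have hc3 := whorlC_cube (hu (θ t))
    have hq := whorlQ_pos (hu (θ t))
    have hq2 := whorlQ_sq (hu (θ t))
    have hs := ((hθ t).sin).const_mul r
    have hco := ((hθ t).cos).const_mul r
    have hX := (whorlX_hasDerivAt (hu (θ t))).comp t hs
    refine HasDerivAt.congr_deriv (hX.prodMk hco) ?_
    simp only [whorlField]
    ext
    · simp only
      field_simp
    · simp only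
      have key : (r * Real.sin (θ t) / whorlQ (r * Real.sin (θ t))) ^ 2 - 1
          = - whorlC (r * Real.sin (θ t)) := by
        rw [div_pow, hq2]
        field_simp
        linear_combination hc3
      rw [key]
      field_simp
  · intro t
    simp only [hθT, Real.sin_add_two_pi, Real.cos_add_two_pi]
end

section
/- Let A be an invertible 2×2 real matrix and let γ(θ) = A·(cos θ, sin θ) with components γ₁(θ), γ₂(θ). Then γ₁(θ)² + γ₂(θ)² > 0 for all θ, and the Poincaré index integral satisfies (1/(2π)) ∫₀^{2π} (γ₁(θ)·γ₂'(θ) − γ₂(θ)·γ₁'(θ)) / (γ₁(θ)² + γ₂(θ)²) dθ = 1 if det A > 0, and = −1 if det A < 0. In particular, the index of a nondegenerate singular point of a planar vector field, computed from its linearization, is −1 if the point is a Saddle (det A < 0) and +1 otherwise. -/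
open Real

/-- The image of the unit circle under the linear map given by the matrix `A`:
`γ(θ) = A·(cos θ, sin θ)`. -/
noncomputable def linCircle (A : Matrix (Fin 2) (Fin 2) ℝ) (θ : ℝ) : Fin 2 → ℝ :=
  A.mulVec ![Real.cos θ, Real.sin θ]

lemma index_aux (P R S D : ℝ) (hD : 0 < D) (h : P * S - R ^ 2 = D ^ 2)
    (hQ : ∀ t : ℝ, 0 < P * cos t ^ 2 + 2 * R * (cos t * sin t) + S * sin t ^ 2) :
    ∫ t in (0 : ℝ)..(2 * π),
      D / (P * cos t ^ 2 + 2 * R * (cos t * sin t) + S * sin t ^ 2) = 2 * π := by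
  have hP : 0 < P := by simpa using hQ 0
  have hS : 0 < S := by simpa using hQ (π / 2)
  have key : ∀ t : ℝ, HasDerivAt (fun t : ℝ => t + arctan
      ((R * (cos t ^ 2 - sin t ^ 2) + (S - P) * (cos t * sin t)) /
        (P * cos t ^ 2 + 2 * R * (cos t * sin t) + S * sin t ^ 2 + D)))
      (D / (P * cos t ^ 2 + 2 * R * (cos t * sin t) + S * sin t ^ 2)) t := by
    intro t
    have hc := hasDerivAt_cos t
    have hs := hasDerivAt_sin t
    have hq := hQ t
    have hcs := hc.mul hs
    have hc2 := hc.pow 2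
    have hs2 := hs.pow 2
    have hW := ((hc2.sub hs2).const_mul R).add (hcs.const_mul (S - P))
    have hq' := (((hc2.const_mul P).add (hcs.const_mul (2 * R))).add (hs2.const_mul S)).add_const D
    have hF := (hasDerivAt_id t).add ((hW.div hq' (by simpa using (add_pos hq hD).ne')).arctan)
    refine hF.congr_deriv ?_
    simp only [Pi.add_apply, Pi.mul_apply, Pi.sub_apply, Pi.pow_apply, Pi.div_apply]
    have h1 := sin_sq_add_cos_sq t
    generalize sin t = s at *
    generalize cos t = c at *
    set Q := P * c ^ 2 + 2 * R * (c * s) + S * s ^ 2 with hQdef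
    set W := R * (c ^ 2 - s ^ 2) + (S - P) * (c * s) with hWdef
    have hW2 : W ^ 2 = Q * (P + S) - Q ^ 2 - D ^ 2 := by
      have e : W ^ 2 + Q ^ 2 - Q * (P + S) * (s ^ 2 + c ^ 2)
          + (P * S - R ^ 2) * (s ^ 2 + c ^ 2) ^ 2 = 0 := by
        rw [hQdef, hWdef]; ring
      rw [h1, h] at e
      linarith
    have hW' : R * (((2 : ℕ) : ℝ) * c ^ (2 - 1) * -s - ((2 : ℕ) : ℝ) * s ^ (2 - 1) * c)
        + (S - P) * (-s * s + c * c) = P + S - 2 * Q := by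
      push_cast
      linear_combination (P + S) * h1 + 2 * hQdef
    have hQ' : P * (((2 : ℕ) : ℝ) * c ^ (2 - 1) * -s) + 2 * R * (-s * s + c * c)
        + S * (((2 : ℕ) : ℝ) * s ^ (2 - 1) * c) = 2 * W := by
      push_cast
      rw [hWdef]; ring
    rw [hW', hQ']
    have hQD : 0 < Q + D := add_pos hq hD
    have hden : 1 + (W / (Q + D)) ^ 2 = Q * (P + S + 2 * D) / (Q + D) ^ 2 := by
      rw [div_pow, hW2]; field_simp; ring
    rw [hden]
    have hT : 0 < P + S + 2 * D := by positivity
    field_simp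
    linear_combination (-2) * hW2
  rw [intervalIntegral.integral_eq_sub_of_hasDerivAt (fun t _ => key t)]
  · simp
  · apply Continuous.intervalIntegrable
    exact continuous_const.div (by fun_prop) (fun t => (hQ t).ne')

/-- for an invertible `2×2` real matrix `A` and
`γ(θ) = A·(cos θ, sin θ)`, one has `γ₁(θ)² + γ₂(θ)² > 0` for all `θ`, and the
Poincaré index integral
`(1/(2π)) ∫₀^{2π} (γ₁ γ₂' - γ₂ γ₁')/(γ₁² + γ₂²) dθ`
equals `1` if `det A > 0` and `-1` if `det A < 0`: the index of a
nondegenerate singular point is `-1` for a Saddle and `+1` otherwise. -/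
theorem poincare_index_linear (A : Matrix (Fin 2) (Fin 2) ℝ) (hA : A.det ≠ 0) :
    (∀ θ : ℝ, 0 < (linCircle A θ 0) ^ 2 + (linCircle A θ 1) ^ 2) ∧
    (0 < A.det →
      (1 / (2 * π)) * ∫ θ in (0 : ℝ)..(2 * π),
        (linCircle A θ 0 * deriv (fun s => linCircle A s 1) θ -
          linCircle A θ 1 * deriv (fun s => linCircle A s 0) θ) /
          ((linCircle A θ 0) ^ 2 + (linCircle A θ 1) ^ 2) = 1) ∧
    (A.det < 0 →
      (1 / (2 * π)) * ∫ θ in (0 : ℝ)..(2 * π),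
        (linCircle A θ 0 * deriv (fun s => linCircle A s 1) θ -
          linCircle A θ 1 * deriv (fun s => linCircle A s 0) θ) /
          ((linCircle A θ 0) ^ 2 + (linCircle A θ 1) ^ 2) = -1) := by
  have e0 : ∀ t, linCircle A t 0 = A 0 0 * cos t + A 0 1 * sin t := by
    intro t; simp [linCircle, Matrix.mulVec, dotProduct, Fin.sum_univ_two]
  have e1 : ∀ t, linCircle A t 1 = A 1 0 * cos t + A 1 1 * sin t := by
    intro t; simp [linCircle, Matrix.mulVec, dotProduct, Fin.sum_univ_two]
  have hd : ∀ a b t : ℝ, deriv (fun s => a * cos s + b * sin s) t = a * -sin t + b * cos t :=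
    fun a b t => (((hasDerivAt_cos t).const_mul a).add ((hasDerivAt_sin t).const_mul b)).deriv
  have hdet := Matrix.det_fin_two A
  simp only [e0, e1, hd]
  generalize A 0 0 = a at *
  generalize A 0 1 = b at *
  generalize A 1 0 = c at *
  generalize A 1 1 = d at *
  generalize A.det = D at *
  have hpos : ∀ t : ℝ, 0 < (a * cos t + b * sin t) ^ 2 + (c * cos t + d * sin t) ^ 2 := by
    intro t
    have h1 := sin_sq_add_cos_sq t
    by_contra hn
    have hx : a * cos t + b * sin t = 0 := by nlinarith [sq_nonneg (a * cos t + b * sin t), sq_nonneg (c * cos t + d * sin t)]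
    have hy : c * cos t + d * sin t = 0 := by nlinarith [sq_nonneg (a * cos t + b * sin t), sq_nonneg (c * cos t + d * sin t)]
    apply hA
    rw [hdet]
    linear_combination (-(a * d - b * c)) * h1 + (d * cos t - c * sin t) * hx
      + (a * sin t - b * cos t) * hy
  have hQ : ∀ t : ℝ, (a * cos t + b * sin t) ^ 2 + (c * cos t + d * sin t) ^ 2 =
      (a ^ 2 + c ^ 2) * cos t ^ 2 + 2 * (a * b + c * d) * (cos t * sin t)
        + (b ^ 2 + d ^ 2) * sin t ^ 2 := by intro t; ring
  have hN : ∀ t : ℝ, (a * cos t + b * sin t) * (c * -sin t + d * cos t)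
      - (c * cos t + d * sin t) * (a * -sin t + b * cos t) = D := by
    intro t
    rw [hdet]
    linear_combination (a * d - b * c) * sin_sq_add_cos_sq t
  refine ⟨hpos, fun h => ?_, fun h => ?_⟩
  · simp only [hN, hQ]
    rw [index_aux _ _ _ D h (by rw [hdet]; ring) (fun t => hQ t ▸ hpos t)]
    field_simp
  · have := index_aux (a ^ 2 + c ^ 2) (a * b + c * d) (b ^ 2 + d ^ 2) (-D) (by linarith)
      (by rw [hdet]; ring) (fun t => hQ t ▸ hpos t)
    simp only [neg_div, intervalIntegral.integral_neg] at this
    simp only [hN, hQ]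
    rw [neg_eq_iff_eq_neg.mp this]
    field_simp
end
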